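/- arXiv:1204.3573 — 3 statements merged into one kernel-verified Lean document; each statement's English description precedes it below -/
import Mathlib

section
/- Let K : ℝ^d → ℂ be a continuous function in L¹(ℝ^d) whose Fourier transform satisfies K̂(z) ≥ a / (1 + b‖z‖^{γ₁})^{γ₂} for all z ∈ ℝ^d, for some constants a, b, γ₁, γ₂ > 0. Then for every subset C ⊆ ℝ^d that is closed with respect to the Euclidean metric and every point x ∈ ℝ^d with x ∉ C, there exists a smooth compactly supported function φ ∈ C_c^∞(ℝ^d) such that φ(x) ≠ 0, φ(y) = 0 for all y ∈ C, and ∫_{ℝ^d} K̂(z)^{−1} |φ̂(z)|² dz < ∞ (so that φ belongs to the reproducing kernel Hilbert space of the translation-invariant kernel K(x − y), and in particular that kernel is completely separating). -/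
open MeasureTheory
open scoped FourierTransform ComplexOrder

/-- Let `K : ℝ^d → ℂ` be a continuous function in `L¹(ℝ^d)` whose Fourier
transform satisfies `K̂(z) ≥ a / (1 + b‖z‖^{γ₁})^{γ₂}` for all `z`, for constants
`a, b, γ₁, γ₂ > 0`.  Then for every Euclidean-closed `C ⊆ ℝ^d` and every `x ∉ C` there is a
smooth compactly supported `φ ∈ C_c^∞(ℝ^d)` with `φ(x) ≠ 0`, `φ ≡ 0` on `C`, and
`∫ K̂(z)^{−1} |φ̂(z)|² dz < ∞` (so `φ` belongs to the RKHS of the translation-invariant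
kernel `K(x−y)`; in particular that kernel is completely separating). -/
theorem stmt_12 {d : ℕ} (K : EuclideanSpace ℝ (Fin d) → ℂ)
    (hcont : Continuous K) (hint : Integrable K)
    (a b γ₁ γ₂ : ℝ) (ha : 0 < a) (hb : 0 < b) (hγ₁ : 0 < γ₁) (hγ₂ : 0 < γ₂)
    (hlb : ∀ z : EuclideanSpace ℝ (Fin d),
      ((a / (1 + b * ‖z‖ ^ γ₁) ^ γ₂ : ℝ) : ℂ) ≤ 𝓕 K z)
    (C : Set (EuclideanSpace ℝ (Fin d))) (hC : IsClosed C)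
    (x : EuclideanSpace ℝ (Fin d)) (hx : x ∉ C) :
    ∃ φ : EuclideanSpace ℝ (Fin d) → ℂ,
      ContDiff ℝ (⊤ : ℕ∞) φ ∧ HasCompactSupport φ ∧
      φ x ≠ 0 ∧ (∀ y ∈ C, φ y = 0) ∧
      Integrable (fun z => (𝓕 K z).re⁻¹ * ‖𝓕 φ z‖ ^ 2) := by
  obtain ⟨f, hfs, hfc, hfd, -, hfx⟩ :=
    exists_contDiff_tsupport_subset (n := (⊤ : ℕ∞)) (hC.isOpen_compl.mem_nhds hx)
  have hφd : ContDiff ℝ (⊤ : ℕ∞) (fun y => (f y : ℂ)) := Complex.ofRealCLM.contDiff.comp hfd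
  have hφc : HasCompactSupport (fun y => (f y : ℂ)) :=
    hfc.comp_left (g := fun r : ℝ => (r : ℂ)) (by simp)
  refine ⟨fun y => (f y : ℂ), hφd, hφc, by simp [hfx], ?_, ?_⟩
  · intro y hy
    have : y ∉ tsupport f := fun h => hfs h hy
    simp [image_eq_zero_of_notMem_tsupport this]
  let ψ : SchwartzMap (EuclideanSpace ℝ (Fin d)) ℂ := 𝓕 (hφc.toSchwartzMap hφd)
  have hψ : ∀ z, 𝓕 (fun y => (f y : ℂ)) z = ψ z := fun z => rfl
  simp only [hψ]
  have hKc : Continuous (𝓕 K) :=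
    VectorFourier.fourierIntegral_continuous Real.continuous_fourierChar
      (by exact continuous_inner) hint
  have hKpos : ∀ z, a / (1 + b * ‖z‖ ^ γ₁) ^ γ₂ ≤ (𝓕 K z).re := by
    intro z
    simpa only [Complex.ofReal_re] using (Complex.le_def.1 (hlb z)).1
  have hden : ∀ z : EuclideanSpace ℝ (Fin d), 0 < (1 + b * ‖z‖ ^ γ₁) ^ γ₂ := fun z => by
    positivity
  have hpos : ∀ z, 0 < (𝓕 K z).re := fun z => lt_of_lt_of_le (div_pos ha (hden z)) (hKpos z)
  set N := ⌈γ₁ * γ₂⌉₊ with hN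
  set M := SchwartzMap.seminorm ℝ 0 0 ψ
  have hM : ∀ z, ‖ψ z‖ ≤ M := SchwartzMap.norm_le_seminorm ℝ ψ
  have hI : Integrable (fun z => ((1 + b) ^ γ₂ / a * 2 ^ (N - 1) * M) *
      (‖z‖ ^ 0 * ‖ψ z‖ + ‖z‖ ^ N * ‖ψ z‖)) :=
    ((ψ.integrable_pow_mul volume 0).add (ψ.integrable_pow_mul volume N)).const_mul _
  refine hI.mono' ?_ (Filter.Eventually.of_forall fun z => ?_)
  · refine Continuous.aestronglyMeasurable ?_
    exact ((Complex.continuous_re.comp hKc).inv₀ fun z => (hpos z).ne').mul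
      (ψ.continuous.norm.pow 2)
  · have h0 := hpos z
    rw [Real.norm_of_nonneg (by positivity)]
    have h1 : (𝓕 K z).re⁻¹ ≤ (1 + b * ‖z‖ ^ γ₁) ^ γ₂ / a := by
      rw [← inv_div]
      exact inv_anti₀ (div_pos ha (hden z)) (hKpos z)
    have ht : (1 : ℝ) ≤ 1 + ‖z‖ := by linarith [norm_nonneg z]
    have h2 : 1 + b * ‖z‖ ^ γ₁ ≤ (1 + b) * (1 + ‖z‖) ^ γ₁ := by
      have e1 : (1 : ℝ) ≤ (1 + ‖z‖) ^ γ₁ := Real.one_le_rpow ht hγ₁.le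
      have e2 : ‖z‖ ^ γ₁ ≤ (1 + ‖z‖) ^ γ₁ :=
        Real.rpow_le_rpow (norm_nonneg z) (by linarith) hγ₁.le
      nlinarith
    have h3 : (1 + b * ‖z‖ ^ γ₁) ^ γ₂ ≤ (1 + b) ^ γ₂ * (1 + ‖z‖) ^ N := by
      calc (1 + b * ‖z‖ ^ γ₁) ^ γ₂ ≤ ((1 + b) * (1 + ‖z‖) ^ γ₁) ^ γ₂ :=
            Real.rpow_le_rpow (by positivity) h2 hγ₂.le
        _ = (1 + b) ^ γ₂ * (1 + ‖z‖) ^ (γ₁ * γ₂) := by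
            rw [Real.mul_rpow (by positivity) (by positivity), ← Real.rpow_mul (by positivity)]
        _ ≤ (1 + b) ^ γ₂ * (1 + ‖z‖) ^ (N : ℝ) := by
            gcongr
            · exact Nat.le_ceil _
        _ = _ := by rw [Real.rpow_natCast]
    have h4 : (1 + ‖z‖) ^ N ≤ 2 ^ (N - 1) * (1 + ‖z‖ ^ N) := by
      simpa using add_pow_le zero_le_one (norm_nonneg z) N
    have hM0 : 0 ≤ M := (norm_nonneg _).trans (hM z)
    calc (𝓕 K z).re⁻¹ * ‖ψ z‖ ^ 2
        ≤ ((1 + b) ^ γ₂ * (2 ^ (N - 1) * (1 + ‖z‖ ^ N)) / a) * (M * ‖ψ z‖) := by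
          rw [sq]
          gcongr
          · exact h1.trans (by gcongr; exact h3.trans (by gcongr))
          · exact hM z
      _ = _ := by ring
end

section
/- For every dimension d ≥ 1 and every σ > 0, the Abel kernel K : ℝ^d × ℝ^d → ℝ defined by K(x,y) = exp(−‖x − y‖/σ), where ‖·‖ is the Euclidean norm, is a kernel of positive type: for all N ∈ ℕ, all x_1, …, x_N ∈ ℝ^d and all c_1, …, c_N ∈ ℂ, Σ_{i,j=1}^N c_i conj(c_j) exp(−‖x_j − x_i‖/σ) is a nonnegative real number. -/
open scoped ComplexOrder
open MeasureTheory Filter Topology Set ProbabilityTheory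

lemma abel_gauss {d N : ℕ} (y : Fin N → EuclideanSpace ℝ (Fin d)) (c : Fin N → ℂ) :
    0 ≤ ∑ i, ∑ j, c i * (starRingEnd ℂ) (c j) * (Real.exp (-‖y j - y i‖ ^ 2 / 2) : ℂ) := by
  set μ := stdGaussian (EuclideanSpace ℝ (Fin d))
  let e : Fin N → EuclideanSpace ℝ (Fin d) → ℂ := fun i w =>
    c i * Complex.exp (-(inner ℝ w (y i) : ℂ) * Complex.I)
  have h1 : ∀ i j w, e i w * (starRingEnd ℂ) (e j w) = c i * (starRingEnd ℂ) (c j) *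
      Complex.exp ((inner ℝ w (y j - y i) : ℝ) * Complex.I) := by
    intro i j w
    simp only [e, map_mul, ← Complex.exp_conj, inner_sub_right]
    rw [mul_mul_mul_comm, ← Complex.exp_add]
    congr 2
    simp
    ring
  have hint : ∀ i j, Integrable (fun w => e i w * (starRingEnd ℂ) (e j w)) μ := by
    intro i j
    simp_rw [h1]
    refine Integrable.const_mul ?_ _
    refine Integrable.of_bound (C := 1) (by fun_prop) ?_
    refine ae_of_all _ fun w => ?_
    rw [Complex.norm_exp_ofReal_mul_I]
  have h2 : ∑ i, ∑ j, c i * (starRingEnd ℂ) (c j) * (Real.exp (-‖y j - y i‖ ^ 2 / 2) : ℂ)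
      = ∫ w, ∑ i, ∑ j, e i w * (starRingEnd ℂ) (e j w) ∂μ := by
    rw [integral_finsetSum _ (fun i _ => integrable_finsetSum _ fun j _ => hint i j)]
    refine Finset.sum_congr rfl fun i _ => ?_
    rw [integral_finsetSum _ (fun j _ => hint i j)]
    refine Finset.sum_congr rfl fun j _ => ?_
    simp_rw [h1]
    rw [integral_const_mul, ← charFun_apply, charFun_stdGaussian]
    simp
  rw [h2]
  refine integral_nonneg fun w => ?_
  simp only [Pi.zero_apply, ← Finset.mul_sum, ← Finset.sum_mul, ← map_sum]
  exact mul_star_self_nonneg _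

lemma abel_exp_id (r x : ℝ) (hx : 0 < x) :
    Real.exp (-(x - r / x) ^ 2) * (1 + r / x ^ 2) + 
      Real.exp (4 * r) * (Real.exp (-(x + r / x) ^ 2) * (1 - r / x ^ 2)) =
    2 * Real.exp (2 * r) * Real.exp (-x ^ 2 - r ^ 2 / x ^ 2) := by
  have e1 : Real.exp (-(x - r / x) ^ 2) = Real.exp (2 * r) * Real.exp (-x ^ 2 - r ^ 2 / x ^ 2) := by
    rw [← Real.exp_add]; congr 1; field_simp; ring
  have e2 : Real.exp (4 * r) * Real.exp (-(x + r / x) ^ 2) =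
      Real.exp (2 * r) * Real.exp (-x ^ 2 - r ^ 2 / x ^ 2) := by
    rw [← Real.exp_add, ← Real.exp_add]; congr 1; field_simp; ring
  rw [← mul_assoc, e1, e2]; ring

lemma abel_integrable (r : ℝ) :
    IntegrableOn (fun x : ℝ => Real.exp (-x ^ 2 - r ^ 2 / x ^ 2)) (Ioi 0) := by
  have h : Integrable (fun x : ℝ => Real.exp (-1 * x ^ 2)) := integrable_exp_neg_mul_sq one_pos
  refine Integrable.mono' h.integrableOn (by fun_prop) (ae_of_all _ fun x => ?_)
  rw [Real.norm_eq_abs, Real.abs_exp, Real.exp_le_exp]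
  have : 0 ≤ r ^ 2 / x ^ 2 := by positivity
  linarith

lemma abel_integral (r : ℝ) (hr : 0 ≤ r) :
    ∫ x in Ioi (0 : ℝ), Real.exp (-x ^ 2 - r ^ 2 / x ^ 2) = √Real.pi / 2 * Real.exp (-(2 * r)) := by
  rcases hr.eq_or_lt with rfl | hr
  · simpa using integral_gaussian_Ioi 1
  let Φ : ℝ → ℝ := fun y => ∫ t in (0:ℝ)..y, Real.exp (-t ^ 2)
  have hΦ : ∀ y, HasDerivAt Φ (Real.exp (-y ^ 2)) y := fun y =>
    intervalIntegral.integral_hasDerivAt_right (Continuous.intervalIntegrable (by fun_prop) _ _)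
      (Continuous.stronglyMeasurableAtFilter (by fun_prop) _ _) (Continuous.continuousAt (by fun_prop))
  have hg : Integrable (fun x : ℝ => Real.exp (-x ^ 2)) := by
    simpa using integrable_exp_neg_mul_sq one_pos
  have hTop : Tendsto Φ atTop (𝓝 (√Real.pi / 2)) := by
    have := intervalIntegral_tendsto_integral_Ioi 0 hg.integrableOn tendsto_id
    simpa [Φ] using (by simpa using integral_gaussian_Ioi 1 : ∫ x in Ioi (0 : ℝ), Real.exp (-x ^ 2) = √Real.pi / 2) ▸ this
  have hodd : ∀ y, Φ (-y) = - Φ y := by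
    intro y
    have := intervalIntegral.integral_comp_neg (a := 0) (b := y) (fun t : ℝ => Real.exp (-t ^ 2))
    simp only [even_two, Even.neg_pow, neg_zero] at this
    simp only [Φ]
    rw [this, intervalIntegral.integral_symm]
  have hBot : Tendsto Φ atBot (𝓝 (-(√Real.pi / 2))) := by
    have := (hTop.comp tendsto_neg_atBot_atTop).neg
    refine this.congr fun y => ?_
    simp [hodd]
  let F : ℝ → ℝ := fun x => Φ (x - r / x) + Real.exp (4 * r) * Φ (x + r / x)
  have hF : ∀ x, 0 < x → HasDerivAt F
      (2 * Real.exp (2 * r) * Real.exp (-x ^ 2 - r ^ 2 / x ^ 2)) x := by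
    intro x hx
    have hd : HasDerivAt (fun x : ℝ => r / x) (-(r / x ^ 2)) x := by
      have := (hasDerivAt_inv hx.ne').const_mul r
      simpa [div_eq_mul_inv] using this
    have h1 := (hΦ (x - r / x)).comp x ((hasDerivAt_id x).sub hd)
    have h2 := ((hΦ (x + r / x)).comp x ((hasDerivAt_id x).add hd)).const_mul (Real.exp (4 * r))
    have := h1.add h2
    rw [← abel_exp_id r x hx]
    convert! this using 1
    ring
  have hdt : Tendsto (fun x : ℝ => r / x) atTop (𝓝 0) := tendsto_const_nhds.div_atTop tendsto_id
  have hd0 : Tendsto (fun x : ℝ => r / x) (𝓝[>] 0) atTop := by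
    simpa [div_eq_mul_inv] using tendsto_inv_nhdsGT_zero.const_mul_atTop hr
  have hid : Tendsto (fun x : ℝ => x) (𝓝[>] 0) (𝓝 0) := tendsto_id.mono_left nhdsWithin_le_nhds
  have hFtop : Tendsto F atTop (𝓝 (√Real.pi / 2 + Real.exp (4 * r) * (√Real.pi / 2))) := by
    refine (hTop.comp ?_).add ((hTop.comp ?_).const_mul _)
    · simpa [sub_eq_add_neg] using tendsto_id.atTop_add hdt.neg
    · exact tendsto_id.atTop_add hdt
  have hF0 : Tendsto F (𝓝[>] 0) (𝓝 (-(√Real.pi / 2) + Real.exp (4 * r) * (√Real.pi / 2))) := by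
    refine (hBot.comp ?_).add ((hTop.comp ?_).const_mul _)
    · simpa [sub_eq_add_neg] using hid.add_atBot (tendsto_neg_atTop_atBot.comp hd0)
    · exact hid.add_atTop hd0
  have key := integral_Ioi_of_hasDerivAt_of_tendsto (a := 0)
    (f := Function.update F 0 (-(√Real.pi / 2) + Real.exp (4 * r) * (√Real.pi / 2)))
    (f' := fun x => 2 * Real.exp (2 * r) * Real.exp (-x ^ 2 - r ^ 2 / x ^ 2))
    (m := √Real.pi / 2 + Real.exp (4 * r) * (√Real.pi / 2))
    (by
      rw [continuousWithinAt_update_same]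
      simpa using hF0)
    (fun x hx => by
      refine (hF x hx).congr_of_eventuallyEq ?_
      filter_upwards [eventually_ne_nhds (ne_of_gt hx)] with z hz
      simp [Function.update_of_ne hz])
    ((abel_integrable r).const_mul _)
    (by
      refine hFtop.congr' ?_
      filter_upwards [eventually_gt_atTop 0] with z hz
      simp [Function.update_of_ne hz.ne'])
  rw [integral_const_mul, Function.update_self] at key
  rw [Real.exp_neg, ← div_eq_mul_inv, eq_div_iff (Real.exp_pos _).ne']
  linarith

theorem stmt_13 {d : ℕ} (hd : 1 ≤ d) (σ : ℝ) (hσ : 0 < σ) :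
    ∀ (N : ℕ) (x : Fin N → EuclideanSpace ℝ (Fin d)) (c : Fin N → ℂ),
      0 ≤ ∑ i, ∑ j, c i * (starRingEnd ℂ) (c j) *
        (Real.exp (-‖x j - x i‖ / σ) : ℂ) := by
  intro N x c
  let r : Fin N → Fin N → ℝ := fun i j => ‖x j - x i‖ / (2 * σ)
  have hr : ∀ i j, 0 ≤ r i j := fun i j => by positivity
  let g : Fin N → Fin N → ℝ → ℂ := fun i j t => 
    c i * (starRingEnd ℂ) (c j) * (Real.exp (-t ^ 2 - r i j ^ 2 / t ^ 2) : ℝ)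
  have hint : ∀ i j, IntegrableOn (g i j) (Ioi 0) := fun i j =>
    (Integrable.ofReal (abel_integrable (r i j))).const_mul _
  have hval : ∀ i j, ∫ t in Ioi (0:ℝ), g i j t = ((√Real.pi / 2 : ℝ) : ℂ) * 
      (c i * (starRingEnd ℂ) (c j) * (Real.exp (-‖x j - x i‖ / σ) : ℂ)) := by
    intro i j
    simp only [g]
    rw [integral_const_mul, integral_complex_ofReal, abel_integral _ (hr i j)]
    have : -(2 * r i j) = -‖x j - x i‖ / σ := by simp only [r]; field_simp
    rw [this]
    push_cast
    ring
  have hpi : 0 < √Real.pi / 2 := by positivity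
  have h2 : ((√Real.pi / 2 : ℝ) : ℂ) * ∑ i, ∑ j, c i * (starRingEnd ℂ) (c j) *
        (Real.exp (-‖x j - x i‖ / σ) : ℂ) = ∫ t in Ioi (0:ℝ), ∑ i, ∑ j, g i j t := by
    rw [integral_finsetSum _ (fun i _ => integrable_finsetSum _ fun j _ => hint i j)]
    rw [Finset.mul_sum]
    refine Finset.sum_congr rfl fun i _ => ?_
    rw [integral_finsetSum _ (fun j _ => hint i j), Finset.mul_sum]
    exact Finset.sum_congr rfl fun j _ => (hval i j).symm
  have h3 : 0 ≤ ∫ t in Ioi (0:ℝ), ∑ i, ∑ j, g i j t := by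
    refine integral_nonneg_of_ae ((ae_restrict_iff' measurableSet_Ioi).2 (ae_of_all _ fun t ht => ?_))
    change 0 ≤ ∑ i, ∑ j, g i j t
    have ht : 0 < t := ht
    have := abel_gauss (fun i => (√2 / (2 * σ * t)) • x i) c
    have h4 : ∑ i, ∑ j, g i j t = ((Real.exp (-t ^ 2) : ℝ) : ℂ) *
        ∑ i, ∑ j, c i * (starRingEnd ℂ) (c j) *
          (Real.exp (-(r i j ^ 2 / t ^ 2)) : ℂ) := by
      rw [Finset.mul_sum]
      refine Finset.sum_congr rfl fun i _ => ?_
      rw [Finset.mul_sum]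
      refine Finset.sum_congr rfl fun j _ => ?_
      simp only [g]
      rw [sub_eq_add_neg (-t ^ 2), Real.exp_add, Complex.ofReal_mul, mul_left_comm]

    rw [h4]
    refine mul_nonneg (by exact_mod_cast (Real.exp_pos _).le) ?_
    convert this using 8 with i _ j _
    simp only [r]
    rw [← smul_sub, norm_smul, Real.norm_eq_abs, abs_of_pos (by positivity), mul_pow,
      div_pow √2, Real.sq_sqrt zero_le_two]
    field_simp
  rw [← h2] at h3
  have hpi' : (0 : ℂ) < ((√Real.pi / 2 : ℝ) : ℂ) := Complex.zero_lt_real.2 hpi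
  exact le_of_mul_le_mul_left (by simpa only [mul_zero] using h3) hpi'
end

section
/- Let (X, d) be a compact metric space, F : X → [0,1] a continuous function whose level set S = {x ∈ X : F(x) = 1} is nonempty, and (F_n)_{n≥1} a sequence of continuous functions F_n : X → [0,1]. Let (τ_n)_{n≥1} be positive numbers with lim_{n→∞} τ_n = 0 and such that sup_{x∈X} |F_n(x) − F(x)| ≤ τ_n for all sufficiently large n. Define S_n = {x ∈ X : F_n(x) ≥ 1 − τ_n}. Then the Hausdorff distance d_H(S_n, S) = max{ sup_{a∈S_n} dist(a, S), sup_{b∈S} dist(b, S_n) } converges to 0 as n → ∞. -/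
open Filter

/-- Let `(X, d)` be a compact metric space, `F : X → [0,1]` continuous
with nonempty level set `S = {x : F(x) = 1}`, and `(F_n)` continuous functions
`X → [0,1]`.  Let `τ_n > 0` with `τ_n → 0` and `sup_x |F_n(x) − F(x)| ≤ τ_n` for all
sufficiently large `n`.  With `S_n = {x : F_n(x) ≥ 1 − τ_n}`, the Hausdorff distance
`d_H(S_n, S)` converges to `0` as `n → ∞`. -/
theorem stmt_19 {X : Type*} [MetricSpace X] [CompactSpace X]
    (F : X → ℝ) (hFcont : Continuous F) (hFrange : ∀ x, F x ∈ Set.Icc (0 : ℝ) 1)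
    (hSne : {x : X | F x = 1}.Nonempty)
    (Fn : ℕ → X → ℝ) (hFncont : ∀ n, Continuous (Fn n))
    (hFnrange : ∀ n x, Fn n x ∈ Set.Icc (0 : ℝ) 1)
    (τ : ℕ → ℝ) (hτpos : ∀ n, 0 < τ n)
    (hτ0 : Tendsto τ atTop (nhds 0))
    (hunif : ∀ᶠ n in atTop, ∀ x, |Fn n x - F x| ≤ τ n) :
    Tendsto (fun n : ℕ =>
        Metric.hausdorffDist {x : X | 1 - τ n ≤ Fn n x} {x : X | F x = 1})
      atTop (nhds 0) := by
  rw [Metric.tendsto_nhds]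
  intro ε hε
  have hclosed : IsClosed {x : X | F x = 1} := isClosed_eq hFcont continuous_const
  have hK : IsCompact {x : X | ε / 2 ≤ Metric.infDist x {x : X | F x = 1}} :=
    (isClosed_le continuous_const (Metric.continuous_infDist_pt _)).isCompact
  have hδ : ∃ δ : ℝ, 0 < δ ∧
      ∀ x, ε / 2 ≤ Metric.infDist x {x : X | F x = 1} → F x ≤ 1 - δ := by
    rcases Set.eq_empty_or_nonempty
      {x : X | ε / 2 ≤ Metric.infDist x {x : X | F x = 1}} with h | h
    · refine ⟨1, one_pos, fun x hx => ?_⟩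
      have : x ∈ {x : X | ε / 2 ≤ Metric.infDist x {x : X | F x = 1}} := hx
      rw [h] at this
      exact this.elim
    · obtain ⟨m, hm, hmax⟩ := hK.exists_isMaxOn h hFcont.continuousOn
      refine ⟨1 - F m, ?_, fun x hx => ?_⟩
      · have hne : F m ≠ 1 := by
          intro h1
          have h2 : Metric.infDist m {x : X | F x = 1} = 0 :=
            Metric.infDist_zero_of_mem h1
          have h3 : ε / 2 ≤ Metric.infDist m {x : X | F x = 1} := hm
          linarith
        have := lt_of_le_of_ne (hFrange m).2 hne
        linarith
      · have : F x ≤ F m := hmax hx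
        linarith
  obtain ⟨δ, hδ, hδF⟩ := hδ
  have hτδ : ∀ᶠ n in atTop, τ n < δ / 2 := hτ0.eventually_lt_const (by linarith)
  filter_upwards [hunif, hτδ] with n hn hτn
  rw [Real.dist_eq, sub_zero, abs_of_nonneg Metric.hausdorffDist_nonneg]
  refine lt_of_le_of_lt (Metric.hausdorffDist_le_of_infDist (r := ε / 2) (by linarith) ?_ ?_)
    (by linarith)
  · intro x hx
    by_contra hlt
    have h1 := hδF x (le_of_lt (not_le.mp hlt))
    have h2 := (abs_le.mp (hn x)).2
    have h3 : 1 - τ n ≤ Fn n x := hx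
    linarith
  · intro x hx
    have h1 : F x = 1 := hx
    have h2 := (abs_le.mp (hn x)).1
    have h3 : x ∈ {x : X | 1 - τ n ≤ Fn n x} := by
      change 1 - τ n ≤ Fn n x
      linarith
    rw [Metric.infDist_zero_of_mem h3]
    linarith
end
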